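/- Let 𝒫x be a partition of Ω and D ∈ Φ(Ω). Then At(ε_x(D)) = σ_x(At(D)); concretely, a maximal coherent set M satisfies ε_x(D) ⊆ M if and only if there exists a maximal coherent set M' with D ⊆ M' and ε_x(M) = ε_x(M'). -/

import Mathlib

open Set

universe u

/-- The set of gambles on `Ω`: bounded real-valued functions. -/
def Gmb (Ω : Type u) : Set (Ω → ℝ) := {f | ∃ B : ℝ, ∀ ω, |f ω| ≤ B}

/-- `L⁺(Ω)`: non-negative, non-vanishing gambles. -/
def GmbPos (Ω : Type u) : Set (Ω → ℝ) :=
  {f | f ∈ Gmb Ω ∧ (∀ ω, 0 ≤ f ω) ∧ f ≠ 0}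

/-- Coherent set of gambles. -/
def Coherent {Ω : Type u} (D : Set (Ω → ℝ)) : Prop :=
  D ⊆ Gmb Ω ∧ GmbPos Ω ⊆ D ∧ (0 : Ω → ℝ) ∉ D ∧
    (∀ f ∈ D, ∀ g ∈ D, f + g ∈ D) ∧
    (∀ f ∈ D, ∀ c : ℝ, 0 < c → c • f ∈ D)

/-- Maximal coherent set of gambles: no coherent set properly contains it. -/
def MaxCoh {Ω : Type u} (M : Set (Ω → ℝ)) : Prop :=
  Coherent M ∧ ∀ D : Set (Ω → ℝ), Coherent D → M ⊆ D → D = M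

/-- Membership in `Φ(Ω)`: coherent sets together with `L(Ω)`. -/
def PhiMem {Ω : Type u} (D : Set (Ω → ℝ)) : Prop :=
  Coherent D ∨ D = Gmb Ω

/-- The closure operator `C` on sets of gambles. -/
def Cl {Ω : Type u} (A : Set (Ω → ℝ)) : Set (Ω → ℝ) :=
  ⋂₀ {D | PhiMem D ∧ A ⊆ D}

/-- Order on partitions (as equivalence relations): `ple x y` iff `𝒫x ≤ 𝒫y`,
i.e. `y` refines `x`. -/
def ple {Ω : Type u} (x y : Setoid Ω) : Prop := ∀ a b : Ω, y.r a b → x.r a b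

/-- Join of two partitions: the relation is the conjunction. -/
def pjoin {Ω : Type u} (x y : Setoid Ω) : Setoid Ω :=
  ⟨fun a b => x.r a b ∧ y.r a b,
    ⟨fun a => ⟨x.iseqv.refl a, y.iseqv.refl a⟩,
     fun h => ⟨x.iseqv.symm h.1, y.iseqv.symm h.2⟩,
     fun h h' => ⟨x.iseqv.trans h.1 h'.1, y.iseqv.trans h.2 h'.2⟩⟩⟩

/-- Conditional independence of partitions: blocks are equivalence classes,
`B1 ∩ B ≠ ∅` and `B2 ∩ B ≠ ∅` imply `B1 ∩ B2 ∩ B ≠ ∅`. -/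
def CondIndep {Ω : Type u} (p1 p2 p : Setoid Ω) : Prop :=
  ∀ a b c : Ω, (∃ u, p1.r a u ∧ p.r c u) → (∃ v, p2.r b v ∧ p.r c v) →
    ∃ w, p1.r a w ∧ p2.r b w ∧ p.r c w

/-- Saturation operator of a partition. -/
def sat {Ω : Type u} (x : Setoid Ω) (S : Set Ω) : Set Ω :=
  {ω | ∃ ω' ∈ S, x.r ω ω'}

/-- `L_x`: the `x`-measurable gambles. -/
def Meas {Ω : Type u} (x : Setoid Ω) : Set (Ω → ℝ) :=
  {f | f ∈ Gmb Ω ∧ ∀ a b : Ω, x.r a b → f a = f b}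

/-- Extraction operator `ε_x`. -/
def eps {Ω : Type u} (x : Setoid Ω) (D : Set (Ω → ℝ)) : Set (Ω → ℝ) :=
  Cl (D ∩ Meas x)

/-- `At(D)`: maximal coherent sets dominating `D`. -/
def Atoms {Ω : Type u} (D : Set (Ω → ℝ)) : Set (Set (Ω → ℝ)) :=
  {M | MaxCoh M ∧ D ⊆ M}

/-- `D_S`: the coherent set of gambles associated to a set `S ⊆ Ω`. -/
def DS {Ω : Type u} (S : Set Ω) : Set (Ω → ℝ) :=
  {f | f ∈ Gmb Ω ∧ 0 < sInf (f '' S)} ∪ GmbPos Ω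

/-- `posi(K)`: positive linear hull. -/
def posi {Ω : Type u} (K : Set (Ω → ℝ)) : Set (Ω → ℝ) :=
  {g | ∃ r : ℕ, 1 ≤ r ∧ ∃ (lam : Fin r → ℝ) (f : Fin r → (Ω → ℝ)),
    (∀ j, 0 < lam j) ∧ (∀ j, f j ∈ K) ∧ g = ∑ j, lam j • f j}
/-- Saturation operator on sets of atoms (maximal coherent sets). -/
def satA {Ω : Type u} (x : Setoid Ω) (A : Set (Set (Ω → ℝ))) : Set (Set (Ω → ℝ)) :=
  {M | MaxCoh M ∧ ∃ M' ∈ A, eps x M = eps x M'}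

/-! A maximal coherent set contains one of `f`, `-f` for every nonzero gamble `f`. Hence, for `M`
and `M'` maximal, `ε_x(M) = ε_x(M')` as soon as `M ∩ L_x ⊆ M'`. So the heart of it is to find,
when `D ∩ L_x ⊆ M`, a maximal `M'` containing both `D` and `M ∩ L_x`. By Zorn's lemma it is enough
that the convex cone generated by `D` and `M ∩ L_x` avoids `0`. If `d + k = 0` with `d ∈ D` and
`k ∈ M ∩ L_x`, then `d = -k` is itself `x`-measurable, so `d ∈ D ∩ L_x ⊆ M` and `0 = d + k ∈ M`,
which is impossible. -/

section ConvexCone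

variable {R E : Type*} [Semiring R] [PartialOrder R]

theorem convexCone_mem_sup [AddCommMonoid E] [DistribSMul R E] {C K : ConvexCone R E} {z : E} :
    z ∈ C ⊔ K ↔ z ∈ C ∨ z ∈ K ∨ ∃ p ∈ C, ∃ k ∈ K, p + k = z := by
  let S : ConvexCone R E :=
    { carrier := {z | z ∈ C ∨ z ∈ K ∨ ∃ p ∈ C, ∃ k ∈ K, p + k = z}
      smul_mem' := by
        rintro c hc _ (hp | hk | ⟨p, hp, k, hk, rfl⟩)
        · exact .inl (C.smul_mem hc hp)
        · exact .inr (.inl (K.smul_mem hc hk))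
        · exact .inr (.inr ⟨_, C.smul_mem hc hp, _, K.smul_mem hc hk, (smul_add c p k).symm⟩)
      add_mem' := by
        rintro f (hf | hf | ⟨p, hp, k, hk, rfl⟩) g (hg | hg | ⟨q, hq, l, hl, rfl⟩)
        · exact .inl (add_mem hf hg)
        · exact .inr (.inr ⟨f, hf, g, hg, rfl⟩)
        · exact .inr (.inr ⟨f + q, add_mem hf hq, l, hl, add_assoc f q l⟩)
        · exact .inr (.inr ⟨g, hg, f, hf, add_comm g f⟩)
        · exact .inr (.inl (add_mem hf hg))
        · exact .inr (.inr ⟨q, hq, f + l, add_mem hf hl, add_left_comm q f l⟩)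
        · exact .inr (.inr ⟨p + g, add_mem hp hg, k, hk, add_right_comm p g k⟩)
        · exact .inr (.inr ⟨p, hp, k + g, add_mem hk hg, (add_assoc p k g).symm⟩)
        · exact .inr (.inr ⟨p + q, add_mem hp hq, k + l, add_mem hk hl,
            add_add_add_comm p q k l⟩) }
  constructor
  · have hle : C ⊔ K ≤ S := sup_le (fun _ => .inl) fun _ => .inr ∘ .inl
    exact fun hz => hle hz
  · have hC : C ≤ C ⊔ K := le_sup_left
    have hK : K ≤ C ⊔ K := le_sup_right
    rintro (hz | hz | ⟨p, hp, k, hk, rfl⟩)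
    · exact hC hz
    · exact hK hz
    · exact add_mem (hC hp) (hK hk)

theorem convexCone_blunt_sup_iff [AddCommGroup E] [DistribSMul R E] {C K : ConvexCone R E} :
    (C ⊔ K).Blunt ↔ C.Blunt ∧ K.Blunt ∧ ∀ k ∈ K, -k ∉ C := by
  have zero_eq_add_iff : (∃ p ∈ C, ∃ k ∈ K, p + k = 0) ↔ ∃ k ∈ K, -k ∈ C := by
    simp only [add_eq_zero_iff_eq_neg]
    exact ⟨fun ⟨_, hp, k, hk, hpk⟩ => ⟨k, hk, hpk ▸ hp⟩, fun ⟨k, hk, hp⟩ => ⟨-k, hp, k, hk, rfl⟩⟩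
  simp only [ConvexCone.Blunt, convexCone_mem_sup, zero_eq_add_iff, not_or, not_exists, not_and]

end ConvexCone

variable {Ω : Type u}

/-- The linear space `L(Ω)` of all gambles, as a subspace of `Ω → ℝ`. -/
def gambleSubmodule (Ω : Type u) : Submodule ℝ (Ω → ℝ) where
  carrier := Gmb Ω
  zero_mem' := ⟨0, fun ω => by simp⟩
  add_mem' := fun ⟨A, hA⟩ ⟨B, hB⟩ =>
    ⟨A + B, fun ω => (abs_add_le _ _).trans (add_le_add (hA ω) (hB ω))⟩
  smul_mem' := fun c _ ⟨B, hB⟩ => ⟨|c| * B, fun ω => by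
    simpa only [Pi.smul_apply, smul_eq_mul, abs_mul] using
      mul_le_mul_of_nonneg_left (hB ω) (abs_nonneg c)⟩

/-- The linear space `L_x` of `x`-measurable gambles, as a subspace of `Ω → ℝ`. -/
def measSubmodule (x : Setoid Ω) : Submodule ℝ (Ω → ℝ) where
  carrier := Meas x
  zero_mem' := ⟨(gambleSubmodule Ω).zero_mem, fun _ _ _ => rfl⟩
  add_mem' := fun ⟨hf, hfx⟩ ⟨hg, hgx⟩ =>
    ⟨(gambleSubmodule Ω).add_mem hf hg, fun a b h => congrArg₂ (· + ·) (hfx a b h) (hgx a b h)⟩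
  smul_mem' := fun c _ ⟨hf, hfx⟩ =>
    ⟨(gambleSubmodule Ω).smul_mem c hf, fun a b h => congrArg (c * ·) (hfx a b h)⟩

namespace Coherent

variable {D M : Set (Ω → ℝ)}

/-- A coherent set of gambles viewed as a convex cone, giving access to the lattice of convex
cones of `Ω → ℝ`. -/
def toConvexCone (hD : Coherent D) : ConvexCone ℝ (Ω → ℝ) where
  carrier := D
  smul_mem' c hc f hf := hD.2.2.2.2 f hf c hc
  add_mem' f hf g hg := hD.2.2.2.1 f hf g hg

theorem subset_gmb (hD : Coherent D) : D ⊆ Gmb Ω := hD.1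

theorem gmbPos_subset (hD : Coherent D) : GmbPos Ω ⊆ D := hD.2.1

theorem blunt_toConvexCone (hD : Coherent D) : hD.toConvexCone.Blunt := hD.2.2.1

theorem neg_notMem (hD : Coherent D) {f : Ω → ℝ} (hf : f ∈ D) : -f ∉ D :=
  hD.blunt_toConvexCone.salient f hf fun hf0 => hD.blunt_toConvexCone (hf0 ▸ hf)

theorem sup (hD : Coherent D) {K : ConvexCone ℝ (Ω → ℝ)} (hK : (K : Set (Ω → ℝ)) ⊆ Gmb Ω)
    (hK0 : K.Blunt) (hDK : ∀ k ∈ K, -k ∉ D) :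
    Coherent ((hD.toConvexCone ⊔ K : ConvexCone ℝ (Ω → ℝ)) : Set (Ω → ℝ)) := by
  let L : ConvexCone ℝ (Ω → ℝ) := (gambleSubmodule Ω).toConvexCone
  have hgambles : hD.toConvexCone ⊔ K ≤ L := sup_le hD.subset_gmb hK
  have hD_le : hD.toConvexCone ≤ hD.toConvexCone ⊔ K := le_sup_left
  exact ⟨hgambles, hD.gmbPos_subset.trans hD_le,
    convexCone_blunt_sup_iff.2 ⟨hD.blunt_toConvexCone, hK0, hDK⟩,
    fun _ hf _ hg => add_mem hf hg, fun _ hf _ hc => ConvexCone.smul_mem _ hc hf⟩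

theorem sUnion {c : Set (Set (Ω → ℝ))} (hne : c.Nonempty) (hdir : DirectedOn (· ⊆ ·) c)
    (hc : ∀ D ∈ c, Coherent D) : Coherent (⋃₀ c) := by
  refine ⟨sUnion_subset fun D hD => (hc D hD).subset_gmb, ?_, ?_, ?_, ?_⟩
  · obtain ⟨D, hD⟩ := hne
    exact (hc D hD).gmbPos_subset.trans (subset_sUnion_of_mem hD)
  · rintro ⟨D, hD, h0⟩
    exact (hc D hD).blunt_toConvexCone h0
  · rintro f ⟨D, hD, hf⟩ g ⟨D', hD', hg⟩
    obtain ⟨E, hE, hDE, hDE'⟩ := hdir D hD D' hD'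
    exact ⟨E, hE, (hc E hE).toConvexCone.add_mem (hDE hf) (hDE' hg)⟩
  · rintro f ⟨D, hD, hf⟩ r hr
    exact ⟨D, hD, (hc D hD).toConvexCone.smul_mem hr hf⟩

theorem exists_maxCoh_superset (hD : Coherent D) : ∃ M, MaxCoh M ∧ D ⊆ M := by
  obtain ⟨M, hDM, hM⟩ := zorn_subset_nonempty {E : Set (Ω → ℝ) | Coherent E}
    (fun c hc hchain hne =>
      ⟨⋃₀ c, Coherent.sUnion hne hchain.directedOn hc, fun _ => subset_sUnion_of_mem⟩) D hD
  exact ⟨M, ⟨hM.prop, fun E hE hME => (hM.eq_of_subset hE hME).symm⟩, hDM⟩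

theorem exists_maxCoh_superset_of_inter_subset (hD : Coherent D) (hM : Coherent M)
    (V : Submodule ℝ (Ω → ℝ)) (hDM : D ∩ V ⊆ M) :
    ∃ M', MaxCoh M' ∧ D ⊆ M' ∧ M ∩ V ⊆ M' := by
  let K : ConvexCone ℝ (Ω → ℝ) := hM.toConvexCone ⊓ V.toConvexCone
  have hK : (K : Set (Ω → ℝ)) ⊆ Gmb Ω := inter_subset_left.trans hM.subset_gmb
  have hK0 : K.Blunt := hM.blunt_toConvexCone.anti inf_le_left
  have hDK : ∀ k ∈ K, -k ∉ D := fun k ⟨hkM, hkV⟩ hkD =>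
    hM.neg_notMem hkM (hDM ⟨hkD, V.neg_mem hkV⟩)
  have hDsup : hD.toConvexCone ≤ hD.toConvexCone ⊔ K := le_sup_left
  have hKsup : K ≤ hD.toConvexCone ⊔ K := le_sup_right
  obtain ⟨M', hM', hsup⟩ := (hD.sup hK hK0 hDK).exists_maxCoh_superset
  exact ⟨M', hM', Subset.trans hDsup hsup, Subset.trans hKsup hsup⟩

end Coherent

theorem PhiMem.coherent_of_zero_notMem {D : Set (Ω → ℝ)} (hD : PhiMem D) (h0 : 0 ∉ D) :
    Coherent D :=
  hD.resolve_right fun h => h0 (h ▸ (gambleSubmodule Ω).zero_mem)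

theorem subset_cl (A : Set (Ω → ℝ)) : A ⊆ Cl A :=
  subset_sInter fun _ hD => hD.2

theorem Coherent.cl_subset_iff {A M : Set (Ω → ℝ)} (hM : Coherent M) : Cl A ⊆ M ↔ A ⊆ M :=
  ⟨(subset_cl A).trans, fun hA => sInter_subset_of_mem ⟨.inl hM, hA⟩⟩

theorem Coherent.eps_subset_iff {D M : Set (Ω → ℝ)} (hM : Coherent M) (x : Setoid Ω) :
    eps x D ⊆ M ↔ D ∩ Meas x ⊆ M :=
  hM.cl_subset_iff

namespace MaxCoh

variable {M M' : Set (Ω → ℝ)}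

theorem mem_or_neg_mem (hM : MaxCoh M) {f : Ω → ℝ} (hf : f ∈ Gmb Ω) (hf0 : f ≠ 0) :
    f ∈ M ∨ -f ∈ M := by
  refine or_iff_not_imp_right.2 fun hneg => ?_
  let K : ConvexCone ℝ (Ω → ℝ) := ConvexCone.hull ℝ {f}
  have mem_K {g : Ω → ℝ} : g ∈ K ↔ ∃ c : ℝ, 0 < c ∧ g = c • f := by
    simp only [K, ConvexCone.mem_hull_of_convex (convex_singleton f), smul_set_singleton,
      mem_singleton_iff]
  have hK : K ≤ (gambleSubmodule Ω).toConvexCone :=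
    ConvexCone.hull_min (singleton_subset_iff.2 hf)
  have hK0 : K.Blunt := fun h0 => by
    obtain ⟨c, hc, hcf⟩ := mem_K.1 h0
    exact smul_ne_zero hc.ne' hf0 hcf.symm
  have hMK : ∀ k ∈ K, -k ∉ M := fun k hk hkM => by
    obtain ⟨c, hc, rfl⟩ := mem_K.1 hk
    rw [← smul_neg] at hkM
    exact hneg ((hM.1.toConvexCone.smul_mem_iff hc).1 hkM)
  have hMsup : hM.1.toConvexCone ≤ hM.1.toConvexCone ⊔ K := le_sup_left
  have hKsup : K ≤ hM.1.toConvexCone ⊔ K := le_sup_right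
  rw [← hM.2 _ (hM.1.sup hK hK0 hMK) hMsup]
  exact hKsup (ConvexCone.subset_hull (mem_singleton f))

theorem inter_eq_inter_of_inter_subset (hM : MaxCoh M) (hM' : Coherent M')
    {S : Type*} [SetLike S (Ω → ℝ)] [NegMemClass S (Ω → ℝ)] (V : S) (h : M ∩ V ⊆ M') :
    M ∩ V = M' ∩ V := by
  refine (subset_inter h inter_subset_right).antisymm fun f ⟨hf, hfV⟩ => ⟨?_, hfV⟩
  have hf0 : f ≠ 0 := fun hf0 => hM'.blunt_toConvexCone (hf0 ▸ hf)
  exact (hM.mem_or_neg_mem (hM'.subset_gmb hf) hf0).resolve_right fun hneg =>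
    hM'.neg_notMem hf (h ⟨hneg, neg_mem hfV⟩)

theorem eps_eq_eps_iff (hM : MaxCoh M) (hM' : Coherent M') (x : Setoid Ω) :
    eps x M = eps x M' ↔ M ∩ Meas x ⊆ M' := by
  constructor
  · intro h
    rw [← hM'.eps_subset_iff, h, hM'.eps_subset_iff]
    exact inter_subset_left
  · intro h
    exact congrArg Cl (hM.inter_eq_inter_of_inter_subset hM' (measSubmodule x) h)

end MaxCoh

theorem stmt16 {Ω : Type u} [Nonempty Ω] (x : Setoid Ω) (D : Set (Ω → ℝ))
    (hD : PhiMem D) :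
    Atoms (eps x D) = satA x (Atoms D) := by
  ext M
  refine and_congr_right fun hM => ?_
  rw [hM.1.eps_subset_iff]
  constructor
  · intro hDM
    have h0 : 0 ∉ D := fun h0 =>
      hM.1.blunt_toConvexCone (hDM ⟨h0, (measSubmodule x).zero_mem⟩)
    obtain ⟨M', hM', hDM', hMM'⟩ :=
      (hD.coherent_of_zero_notMem h0).exists_maxCoh_superset_of_inter_subset hM.1
        (measSubmodule x) hDM
    exact ⟨M', ⟨hM', hDM'⟩, (hM.eps_eq_eps_iff hM'.1 x).2 hMM'⟩
  · rintro ⟨M', ⟨hM', hDM'⟩, heps⟩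
    exact (inter_subset_inter_left _ hDM').trans ((hM'.eps_eq_eps_iff hM.1 x).1 heps.symm)
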